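/- (i) For every prime power q and all integers n ≥ m ≥ 1, one has x_q ≤ x. (ii) Fix a prime power q and ε ∈ (0,1/2). There exist constants c, C > 0 (depending only on q and ε) and an integer N such that for all integers n ≥ N and all integers m with (3/4)·(log n)/(log q) ≤ m ≤ (2−ε)·(log n)/(log q), one has c·(min{n, q^m})² / (q^{m}·n·m) ≤ x − x_q ≤ C·min{n, q^m} / ( q^{m}·m·(1 − x_q/q) ). -/

import Mathlib

open Real

noncomputable section

/-- Predicate characterizing the Dickman function `ρ : [0,∞) → (0,∞)`:
continuous on `[0,∞)`, positive, equal to `1` on `[0,1]`, and satisfying the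
delay differential equation `t·ρ'(t) + ρ(t-1) = 0` for `t > 1`. -/
def IsDickman (ρ : ℝ → ℝ) : Prop :=
  ContinuousOn ρ (Set.Ici 0) ∧
  (∀ t : ℝ, 0 ≤ t → 0 < ρ t) ∧
  (∀ t ∈ Set.Icc (0:ℝ) 1, ρ t = 1) ∧
  (∀ t : ℝ, 1 < t → HasDerivAt ρ (-(ρ (t - 1)) / t) t)

/-- `ξ(u)`: for `u > 1`, the unique positive solution of `e^ξ = 1 + u·ξ`; otherwise `0`. -/
def xi (u : ℝ) : ℝ :=
  open Classical in
  if h : ∃ x : ℝ, 0 < x ∧ Real.exp x = 1 + u * x then h.choose else 0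

/-- `p_{n,m}`: probability that a uniformly random permutation of `{1,…,n}` is `m`-friable,
i.e. has no cycle of length greater than `m`. -/
def permProb (n m : ℕ) : ℝ :=
  (Nat.card {σ : Equiv.Perm (Fin n) // ∀ c ∈ σ.cycleType, c ≤ m} : ℝ) /
    (Nat.factorial n : ℝ)

/-- `p_{n,m,q}`: proportion of monic polynomials of degree `n` over a finite field `F`
(of cardinality `q`) that are `m`-friable, i.e. all of whose monic irreducible factors
have degree at most `m`. -/
def polyProb (F : Type) [Field F] [Fintype F] (n m : ℕ) : ℝ :=
  (Nat.card {f : Polynomial F // f.Monic ∧ f.natDegree = n ∧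
      ∀ p : Polynomial F, p.Monic → Irreducible p → p ∣ f → p.natDegree ≤ m} : ℝ) /
    (Fintype.card F : ℝ) ^ n

/-- `F_q(z) = ∏_{deg P ≤ m} (1 - (z/q)^{deg P})⁻¹`, the product over monic irreducible
polynomials `P` over `F` of degree at most `m`. -/
def FqFun (F : Type) [Field F] [Fintype F] (m : ℕ) (z : ℝ) : ℝ :=
  ∏ᶠ p ∈ {p : Polynomial F | p.Monic ∧ Irreducible p ∧ p.natDegree ≤ m},
    (1 - (z / (Fintype.card F : ℝ)) ^ p.natDegree)⁻¹

/-- `G_q(z) = F_q(z) · exp(-∑_{i=1}^m z^i/i)`. -/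
def Gq (F : Type) [Field F] [Fintype F] (m : ℕ) (z : ℝ) : ℝ :=
  FqFun F m z * Real.exp (-(∑ i ∈ Finset.Icc 1 m, z ^ i / (i : ℝ)))

/-- The coefficients `d_{m,i}`. -/
def dcoef (m i : ℕ) : ℝ :=
  if i = m then -(1 / (m : ℝ)) * ∑ j ∈ Finset.Icc 2 m, (1 : ℝ) / (j : ℝ)
  else Real.Gamma ((i : ℝ) + (i : ℝ) / (m : ℝ)) /
    (((m : ℝ) - (i : ℝ)) * (Nat.factorial i : ℝ) * Real.Gamma (1 + (i : ℝ) / (m : ℝ)))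

/-- `T(s) = ∫₀^s ((e^t - 1)/t)·((t/m)/(1 - e^{-t/m}) - 1) dt`, integrand extended by `0` at `t = 0`. -/
def Tfun (m : ℕ) (s : ℝ) : ℝ :=
  ∫ t in (0:ℝ)..s,
    if t = 0 then 0 else
      ((Real.exp t - 1) / t) * ((t / (m : ℝ)) / (1 - Real.exp (-t / (m : ℝ))) - 1)

end

/-!
Write `w = z / q` and let `a_d` be `d` times the number of monic irreducible polynomials of degree
`d`. Logarithmic differentiation gives `z F_q'(z) / F_q(z) = ∑_{d ≤ m} a_d w ^ d / (1 - w ^ d)`.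
Expand the geometric series and collect powers of `w`: by Gauss's formula `∑_{d ∣ j} a_d = q ^ j`,
the exponents `j ≤ m` contribute `S(z) = ∑_{j ≤ m} z ^ j`, and the larger ones a tail `R(w) ≥ 0`.
Hence `S(x) - S(x_q) = R(x_q / q) ≥ 0`, and `x_q ≤ x`.

For the two-sided bound, `(x - x_q) m x_q ^ (m - 1) ≤ S(x) - S(x_q) ≤ (x - x_q) m n` and
`x_q ^ (2 m) / (2 q ^ m) ≤ R ≤ (1 - x_q / q)⁻¹ ∑_{j ≤ m} (x_q ^ 2 / q) ^ j`. If `m` is at most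
`a log n / log q` with `a < 2` and `n` is large, then `x_q` exceeds a fixed `y > √q`. The last sum
is then comparable to its top term, and so is `S(x_q)`, so that either `R ≥ n / 2` or `x_q ^ m` is
of order at least `n`.
-/

section PowerSums

open Finset

variable {K : Type*} [Field K] [LinearOrder K] [IsStrictOrderedRing K]

theorem one_sub_inv_mul_sum_Icc_pow_le {r₀ r : K} (h₀ : 0 < r₀) (hr : r₀ ≤ r) (m : ℕ) :
    (1 - r₀⁻¹) * ∑ j ∈ Icc 1 m, r ^ j ≤ r ^ m - 1 := by
  have hr₀ : 0 < r := h₀.trans_le hr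
  calc (1 - r₀⁻¹) * ∑ j ∈ Icc 1 m, r ^ j ≤ (1 - r⁻¹) * ∑ j ∈ Icc 1 m, r ^ j := by gcongr
    _ = r⁻¹ * ((∑ j ∈ Ico 1 (m + 1), r ^ j) * (r - 1)) := by
      rw [Ico_add_one_right_eq_Icc]
      field_simp
    _ = r ^ m - 1 := by
      rw [geom_sum_Ico_mul r (Nat.le_add_left 1 m), pow_succ]
      field_simp

theorem sum_Icc_pow_le_mul_pow {r y : K} (hr : 0 ≤ r) (hry : r ≤ y) (hy : 1 ≤ y) (m : ℕ) :
    ∑ j ∈ Icc 1 m, r ^ j ≤ m * y ^ m :=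
  calc ∑ j ∈ Icc 1 m, r ^ j ≤ ∑ _j ∈ Icc 1 m, y ^ m := sum_le_sum fun _ hj => by
        grw [hry, (mem_Icc.1 hj).2]
    _ = m * y ^ m := by simp

theorem le_of_sum_Icc_pow_le {m : ℕ} (hm : 1 ≤ m) {x z : K} (hx : 0 ≤ x)
    (h : ∑ j ∈ Icc 1 m, z ^ j ≤ ∑ j ∈ Icc 1 m, x ^ j) : z ≤ x := by
  contrapose! h
  exact sum_lt_sum_of_nonempty (nonempty_Icc.2 hm) fun j hj =>
    pow_lt_pow_left₀ h hx (Nat.one_le_iff_ne_zero.1 (mem_Icc.1 hj).1)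

theorem sum_Icc_pow_sub_le {x z : K} (hz : 0 ≤ z) (hzx : z ≤ x) (hx : 1 ≤ x) (m : ℕ) :
    ∑ j ∈ Icc 1 m, x ^ j - ∑ j ∈ Icc 1 m, z ^ j ≤ (x - z) * m * ∑ j ∈ Icc 1 m, x ^ j := by
  rw [← sum_sub_distrib, mul_sum]
  refine sum_le_sum fun j hj => ?_
  have hjm : j ≤ m := (mem_Icc.1 hj).2
  have hxz : 0 ≤ x - z := sub_nonneg.2 hzx
  calc x ^ j - z ^ j ≤ |x - z| * j * max |x| |z| ^ (j - 1) :=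
        (le_abs_self _).trans (abs_pow_sub_pow_le ..)
    _ = (x - z) * j * x ^ (j - 1) := by
      rw [abs_of_nonneg hxz, abs_of_nonneg hz, abs_of_nonneg (hz.trans hzx), max_eq_left hzx]
    _ ≤ (x - z) * m * x ^ j := by
      gcongr
      exact Nat.sub_le j 1

theorem le_sum_Icc_pow_sub {m : ℕ} (hm : 1 ≤ m) {x z : K} (hz : 0 ≤ z) (hzx : z ≤ x) :
    (x - z) * m * z ^ (m - 1) ≤ ∑ j ∈ Icc 1 m, x ^ j - ∑ j ∈ Icc 1 m, z ^ j := by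
  have htangent : z ^ m + m * z ^ (m - 1) * (x - z) ≤ x ^ m := by
    simpa using pow_add_mul_le_add_pow hz (by linarith : 0 ≤ 2 * z + (x - z)) m
  calc (x - z) * m * z ^ (m - 1) ≤ x ^ m - z ^ m := by linarith
    _ ≤ ∑ j ∈ Icc 1 m, (x ^ j - z ^ j) :=
      single_le_sum (f := fun j => x ^ j - z ^ j)
        (fun j _ => sub_nonneg.2 (pow_le_pow_left₀ hz hzx j)) (mem_Icc.2 ⟨hm, le_rfl⟩)
    _ = _ := sum_sub_distrib ..

end PowerSums

section MonicIrreducibles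

open Finset Polynomial

theorem finite_setOf_natDegree_le (R : Type*) [Semiring R] [Finite R] (m : ℕ) :
    {p : R[X] | p.natDegree ≤ m}.Finite := by
  have : Finite (degreeLT R (m + 1)) := .of_equiv _ (degreeLTEquiv R (m + 1)).symm.toEquiv
  refine (Set.toFinite (degreeLT R (m + 1) : Set R[X])).subset fun p hp => mem_degreeLT.2 ?_
  exact degree_le_natDegree.trans_lt (by exact_mod_cast Nat.lt_succ_of_le hp)

variable (F : Type*) [Field F]

/-- The monic irreducible polynomials of degree `d` over the finite field `F`. -/
noncomputable def monicIrreducibles [Finite F] (d : ℕ) : Finset F[X] :=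
  Set.Finite.toFinset (s := {p | p.Monic ∧ Irreducible p ∧ p.natDegree = d})
    ((finite_setOf_natDegree_le F d).subset fun _ hp => hp.2.2.le)

@[simp]
theorem mem_monicIrreducibles [Finite F] {d : ℕ} {p : F[X]} :
    p ∈ monicIrreducibles F d ↔ p.Monic ∧ Irreducible p ∧ p.natDegree = d := by
  simp [monicIrreducibles]

theorem pairwiseDisjoint_monicIrreducibles [Finite F] (s : Set ℕ) :
    s.PairwiseDisjoint (monicIrreducibles F) := fun _ _ _ _ hne =>
  disjoint_left.2 fun _ hp hp' => hne <| by
    rw [← ((mem_monicIrreducibles F).1 hp).2.2, ((mem_monicIrreducibles F).1 hp').2.2]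

/-- The number of elements of degree `d` over the finite field `F` in an algebraic closure of `F`,
counted as the roots of the monic irreducible polynomials of degree `d`. -/
noncomputable def degreeCount [Finite F] (d : ℕ) : ℕ :=
  d * #(monicIrreducibles F d)

variable {F}

theorem natCard_minpoly_eq {L : Type*} [Field L] [Finite L] [Algebra F L] {f : F[X]}
    (hmonic : f.Monic) (hirr : Irreducible f) (hdvd : f.natDegree ∣ Module.finrank F L) :
    Nat.card {x : L // minpoly F x = f} = f.natDegree := by
  have : Fact (Irreducible f) := ⟨hirr⟩
  have hrank : Module.finrank F (AdjoinRoot f) = f.natDegree :=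
    finrank_quotient_span_eq_natDegree
  have hroot (x : L) : minpoly F x = f ↔ x ∈ f.aroots L := by
    rw [mem_aroots]
    refine ⟨?_, fun h => (minpoly.eq_of_irreducible_of_monic hirr h.2 hmonic).symm⟩
    rintro rfl
    exact ⟨hmonic.ne_zero, minpoly.aeval F x⟩
  rw [Nat.card_congr ((Equiv.subtypeEquivRight hroot).trans
      (AdjoinRoot.equiv L F f hirr.ne_zero).symm),
    FiniteField.natCard_algHom_of_finrank_dvd (hrank ▸ hdvd), hrank]

theorem sum_divisors_finrank_degreeCount (F L : Type*) [Field F] [Finite F] [Field L] [Finite L]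
    [Algebra F L] : ∑ d ∈ (Module.finrank F L).divisors, degreeCount F d = Nat.card L := by
  classical
  have := Fintype.ofFinite L
  have hmaps : ∀ x ∈ (univ : Finset L),
      minpoly F x ∈ (Module.finrank F L).divisors.biUnion (monicIrreducibles F) := fun x _ => by
    have hx : IsIntegral F x := Algebra.IsIntegral.isIntegral x
    rw [mem_biUnion]
    exact ⟨_, Nat.mem_divisors.2 ⟨minpoly.degree_dvd hx, Module.finrank_pos.ne'⟩,
      (mem_monicIrreducibles F).2 ⟨minpoly.monic hx, minpoly.irreducible hx, rfl⟩⟩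
  rw [Nat.card_eq_fintype_card, ← card_univ, card_eq_sum_card_fiberwise hmaps,
    sum_biUnion (pairwiseDisjoint_monicIrreducibles F _)]
  refine sum_congr rfl fun d hd => ?_
  rw [degreeCount, mul_comm, ← smul_eq_mul, ← sum_const]
  refine sum_congr rfl fun f hf => ?_
  obtain ⟨hmonic, hirr, rfl⟩ := (mem_monicIrreducibles F).1 hf
  rw [← Fintype.card_subtype, ← Nat.card_eq_fintype_card,
    natCard_minpoly_eq hmonic hirr (Nat.dvd_of_mem_divisors hd)]

variable (F) [Finite F]

theorem sum_divisors_degreeCount {n : ℕ} (hn : n ≠ 0) :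
    ∑ d ∈ n.divisors, degreeCount F d = Nat.card F ^ n := by
  obtain ⟨p, _⟩ := CharP.exists F
  have : Fact p.Prime := ⟨CharP.char_is_prime F p⟩
  have : NeZero n := ⟨hn⟩
  rw [← FiniteField.natCard_extension F p n,
    ← sum_divisors_finrank_degreeCount F (FiniteField.Extension F p n),
    FiniteField.finrank_extension]

theorem degreeCount_le {d : ℕ} (hd : d ≠ 0) : degreeCount F d ≤ Nat.card F ^ d := by
  rw [← sum_divisors_degreeCount F hd]
  exact single_le_sum_of_canonicallyOrdered (Nat.mem_divisors_self d hd)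

theorem card_pow_le_two_mul_degreeCount {m : ℕ} (hm : m ≠ 0) :
    Nat.card F ^ m ≤ 2 * degreeCount F m := by
  set q := Nat.card F
  set k := m / 2
  have hq : 2 ≤ q := Finite.one_lt_card
  have hproper : ∑ d ∈ m.properDivisors, degreeCount F d ≤ ∑ d ∈ Icc 1 k, q ^ d := by
    calc ∑ d ∈ m.properDivisors, degreeCount F d ≤ ∑ d ∈ Icc 1 k, degreeCount F d := by
          refine sum_le_sum_of_subset fun d hd => mem_Icc.2 ?_
          obtain ⟨j, hj, rfl⟩ := (Nat.mem_properDivisors_iff_exists hm).1 hd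
          exact ⟨Nat.pos_of_mem_properDivisors hd,
            (Nat.le_div_iff_mul_le two_pos).2 (Nat.mul_le_mul_left d hj)⟩
      _ ≤ ∑ d ∈ Icc 1 k, q ^ d := sum_le_sum fun d hd =>
          degreeCount_le F (Nat.one_le_iff_ne_zero.1 (mem_Icc.1 hd).1)
  have hgauss : ∑ d ∈ m.properDivisors, degreeCount F d + degreeCount F m = q ^ m := by
    rw [add_comm, ← sum_cons Nat.self_notMem_properDivisors, Nat.cons_self_properDivisors hm,
      sum_divisors_degreeCount F hm]
  have hgeom : ∑ d ∈ Icc 1 k, (q : ℝ) ^ d ≤ 2 * (q ^ k - 1) := by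
    linarith [one_sub_inv_mul_sum_Icc_pow_le two_pos (Nat.ofNat_le_cast.2 hq : (2 : ℝ) ≤ q) k]
  have hsquare : (q ^ k) ^ 2 ≤ q ^ m := by
    rw [← pow_mul]
    exact Nat.pow_le_pow_right (by lia) (Nat.div_mul_le_self m 2)
  rify at hproper hgauss hsquare ⊢
  -- `4 (t - 1) ≤ t ^ 2` for `t = q ^ k`
  linarith [sq_nonneg ((q : ℝ) ^ k - 2)]

end MonicIrreducibles

section LambertSums

open Finset

theorem div_one_sub_eq_sum_Icc_add {K : Type*} [Field K] {r : K} (hr : r ≠ 1) (m : ℕ) :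
    r / (1 - r) = ∑ k ∈ Icc 1 m, r ^ k + r ^ (m + 1) / (1 - r) := by
  rw [← Ico_add_one_right_eq_Icc, geom_sum_Ico' hr (Nat.le_add_left 1 m), ← add_div]
  ring

theorem sum_Icc_sum_Icc_div_eq_sum_Icc_sum_divisors {M : Type*} [AddCommMonoid M]
    (f : ℕ → ℕ → M) (m : ℕ) :
    ∑ d ∈ Icc 1 m, ∑ k ∈ Icc 1 (m / d), f d (d * k) =
      ∑ j ∈ Icc 1 m, ∑ d ∈ j.divisors, f d j := by
  rw [sum_sigma', sum_sigma']
  refine sum_bij' (fun p _ => ⟨p.1 * p.2, p.1⟩) (fun p _ => ⟨p.2, p.1 / p.2⟩) ?_ ?_ ?_ ?_ ?_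
  · rintro ⟨d, k⟩ h
    simp only [mem_sigma, mem_Icc, Nat.mem_divisors] at h ⊢
    have hpos : 0 < d * k := Nat.mul_pos h.1.1 h.2.1
    exact ⟨⟨hpos, Nat.mul_comm d k ▸ Nat.mul_le_of_le_div _ _ _ h.2.2⟩,
      Nat.dvd_mul_right d k, hpos.ne'⟩
  · rintro ⟨j, d⟩ h
    simp only [mem_sigma, mem_Icc, Nat.mem_divisors] at h ⊢
    obtain ⟨⟨hj, hjm⟩, hdj, -⟩ := h
    have hd : d ≤ j := Nat.le_of_dvd hj hdj
    exact ⟨⟨Nat.pos_of_dvd_of_pos hdj hj, hd.trans hjm⟩,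
      Nat.div_pos hd (Nat.pos_of_dvd_of_pos hdj hj), Nat.div_le_div_right hjm⟩
  · rintro ⟨d, k⟩ h
    rw [mem_sigma, mem_Icc] at h
    rw [Nat.mul_div_cancel_left k h.1.1]
  · rintro ⟨j, d⟩ h
    rw [mem_sigma, Nat.mem_divisors] at h
    rw [Nat.mul_div_cancel' h.2.1]
  · intro _ _
    rfl

/-- The part of the Lambert sum `∑_{d ≤ m} a d * (w ^ d + w ^ (2 * d) + ⋯)` carried by the powers
of `w` with exponent larger than `m`; `d * (m / d + 1)` is the least multiple of `d` above `m`. -/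
def lambertTail {K : Type*} [Field K] (a : ℕ → K) (m : ℕ) (w : K) : K :=
  ∑ d ∈ Icc 1 m, a d * (w ^ (d * (m / d + 1)) / (1 - w ^ d))

variable {K : Type*} [Field K] [LinearOrder K] [IsStrictOrderedRing K] {a : ℕ → K} {w : K}

theorem sum_mul_pow_div_one_sub_pow (a : ℕ → K) (hw₀ : 0 ≤ w) (hw₁ : w < 1) (m : ℕ) :
    ∑ d ∈ Icc 1 m, a d * (w ^ d / (1 - w ^ d)) =
      ∑ j ∈ Icc 1 m, (∑ d ∈ j.divisors, a d) * w ^ j + lambertTail a m w := by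
  simp_rw [sum_mul]
  rw [← sum_Icc_sum_Icc_div_eq_sum_Icc_sum_divisors fun d j => a d * w ^ j, lambertTail,
    ← sum_add_distrib]
  refine sum_congr rfl fun d hd => ?_
  have hwd : w ^ d ≠ 1 :=
    (pow_lt_one₀ hw₀ hw₁ (Nat.one_le_iff_ne_zero.1 (mem_Icc.1 hd).1)).ne
  simp_rw [← mul_sum, ← mul_add, pow_mul, ← div_one_sub_eq_sum_Icc_add hwd]

theorem pow_div_one_sub_pow_nonneg (hw₀ : 0 ≤ w) (hw₁ : w ≤ 1) (k d : ℕ) :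
    0 ≤ w ^ k / (1 - w ^ d) :=
  div_nonneg (pow_nonneg hw₀ k) (sub_nonneg.2 (pow_le_one₀ hw₀ hw₁))

theorem lambertTail_nonneg (ha : ∀ d, 0 ≤ a d) (hw₀ : 0 ≤ w) (hw₁ : w ≤ 1) (m : ℕ) :
    0 ≤ lambertTail a m w :=
  sum_nonneg fun d _ => mul_nonneg (ha d) (pow_div_one_sub_pow_nonneg hw₀ hw₁ _ d)

theorem mul_pow_two_mul_le_lambertTail (ha : ∀ d, 0 ≤ a d) (hw₀ : 0 ≤ w) (hw₁ : w < 1) {m : ℕ}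
    (hm : m ≠ 0) : a m * w ^ (2 * m) ≤ lambertTail a m w := by
  have hpos : 0 < 1 - w ^ m := sub_pos.2 (pow_lt_one₀ hw₀ hw₁ hm)
  calc a m * w ^ (2 * m) ≤ a m * (w ^ (2 * m) / (1 - w ^ m)) :=
        mul_le_mul_of_nonneg_left
          (le_div_self (pow_nonneg hw₀ _) hpos (sub_le_self 1 (pow_nonneg hw₀ m))) (ha m)
    _ = a m * (w ^ (m * (m / m + 1)) / (1 - w ^ m)) := by
      rw [Nat.div_self (Nat.pos_of_ne_zero hm), mul_comm m, one_add_one_eq_two]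
    _ ≤ lambertTail a m w :=
      single_le_sum (f := fun d => a d * (w ^ (d * (m / d + 1)) / (1 - w ^ d)))
        (fun d _ => mul_nonneg (ha d) (pow_div_one_sub_pow_nonneg hw₀ hw₁.le _ d))
        (mem_Icc.2 ⟨Nat.pos_of_ne_zero hm, le_rfl⟩)

theorem one_sub_mul_lambertTail_le {q : K} (ha : ∀ d, 0 ≤ a d) (haq : ∀ d, d ≠ 0 → a d ≤ q ^ d)
    (hw₀ : 0 ≤ w) (hw₁ : w < 1) (m : ℕ) :
    (1 - w) * lambertTail a m w ≤ ∑ d ∈ Icc 1 m, (q * w ^ 2) ^ d := by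
  rw [lambertTail, mul_sum]
  refine sum_le_sum fun d hd => ?_
  obtain ⟨hd, hdm⟩ := mem_Icc.1 hd
  have hd₀ : d ≠ 0 := Nat.one_le_iff_ne_zero.1 hd
  have hexp : 2 * d ≤ d * (m / d + 1) := by
    rw [mul_comm]
    exact Nat.mul_le_mul_left d (Nat.succ_le_succ (Nat.div_pos hdm hd))
  have hratio : (1 - w) / (1 - w ^ d) ≤ 1 :=
    div_le_one_of_le₀ (sub_le_sub_left (pow_le_of_le_one hw₀ hw₁.le hd₀) 1)
      (sub_nonneg.2 (pow_le_one₀ hw₀ hw₁.le))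
  have hqd : 0 ≤ q ^ d := (ha d).trans (haq d hd₀)
  calc (1 - w) * (a d * (w ^ (d * (m / d + 1)) / (1 - w ^ d)))
      = a d * w ^ (d * (m / d + 1)) * ((1 - w) / (1 - w ^ d)) := by ring
    _ ≤ a d * w ^ (d * (m / d + 1)) * 1 :=
      mul_le_mul_of_nonneg_left hratio (mul_nonneg (ha d) (pow_nonneg hw₀ _))
    _ ≤ q ^ d * w ^ (2 * d) * 1 := by
      gcongr ?_ * ?_ * 1
      · exact haq d hd₀
      · exact pow_le_pow_of_le_one hw₀ hw₁.le hexp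
    _ = (q * w ^ 2) ^ d := by rw [mul_one, pow_mul, mul_pow]

end LambertSums

section LogarithmicDerivative

open Finset Polynomial

theorem mul_logDeriv_inv_one_sub_div_pow {q z : ℝ} {d : ℕ} (h : (z / q) ^ d ≠ 1) :
    z * logDeriv (fun z => (1 - (z / q) ^ d)⁻¹) z = d * ((z / q) ^ d / (1 - (z / q) ^ d)) := by
  have hne : 1 - (z / q) ^ d ≠ 0 := sub_ne_zero.2 h.symm
  have hd : d ≠ 0 := fun hd => h (hd ▸ pow_zero _)
  have hderiv := ((((hasDerivAt_id' z).div_const q).fun_pow d).const_sub 1).fun_inv hne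
  calc z * logDeriv (fun z => (1 - (z / q) ^ d)⁻¹) z
      = d * ((z / q) ^ (d - 1) * (z / q) / (1 - (z / q) ^ d)) := by
        rw [logDeriv_apply, hderiv.deriv]
        field_simp
    _ = d * ((z / q) ^ d / (1 - (z / q) ^ d)) := by rw [pow_sub_one_mul hd]

variable (F : Type) [Field F] [Fintype F] {m : ℕ} {z : ℝ}

theorem FqFun_eq_prod (m : ℕ) (z : ℝ) :
    FqFun F m z = ∏ d ∈ Icc 1 m,
      ((1 - (z / Fintype.card F) ^ d)⁻¹) ^ #(monicIrreducibles F d) := by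
  classical
  have hset : {p : F[X] | p.Monic ∧ Irreducible p ∧ p.natDegree ≤ m} =
      ↑((Icc 1 m).biUnion (monicIrreducibles F)) := by
    ext p
    rw [mem_coe, mem_biUnion]
    constructor
    · rintro ⟨hmonic, hirr, hdeg⟩
      exact ⟨p.natDegree, mem_Icc.2 ⟨hirr.natDegree_pos, hdeg⟩,
        (mem_monicIrreducibles F).2 ⟨hmonic, hirr, rfl⟩⟩
    · rintro ⟨d, hd, hp⟩
      obtain ⟨hmonic, hirr, rfl⟩ := (mem_monicIrreducibles F).1 hp
      exact ⟨hmonic, hirr, (mem_Icc.1 hd).2⟩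
  rw [FqFun, hset, finprod_mem_coe_finset, prod_biUnion (pairwiseDisjoint_monicIrreducibles F _)]
  refine prod_congr rfl fun d _ => ?_
  rw [← prod_const]
  exact prod_congr rfl fun p hp => by rw [((mem_monicIrreducibles F).1 hp).2.2]

theorem mul_logDeriv_FqFun (hz₀ : 0 ≤ z) (hz : z < Fintype.card F) :
    z * logDeriv (FqFun F m) z = ∑ d ∈ Icc 1 m, degreeCount F d *
      ((z / Fintype.card F) ^ d / (1 - (z / Fintype.card F) ^ d)) := by
  set q : ℝ := (Fintype.card F : ℝ)
  have hw (d : ℕ) (hd : d ∈ Icc 1 m) : (z / q) ^ d ≠ 1 :=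
    (pow_lt_one₀ (div_nonneg hz₀ (hz₀.trans hz.le)) ((div_lt_one (hz₀.trans_lt hz)).2 hz)
      (Nat.one_le_iff_ne_zero.1 (mem_Icc.1 hd).1)).ne
  have hne (d : ℕ) (hd : d ∈ Icc 1 m) : 1 - (z / q) ^ d ≠ 0 := sub_ne_zero.2 (hw d hd).symm
  have hdiff (d : ℕ) (hd : d ∈ Icc 1 m) :
      DifferentiableAt ℝ (fun z => (1 - (z / q) ^ d)⁻¹) z := by
    fun_prop (disch := exact hne d hd)
  rw [funext (FqFun_eq_prod F m), logDeriv_prod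
    (f := fun d z => ((1 - (z / q) ^ d)⁻¹) ^ #(monicIrreducibles F d))
    (fun d hd => pow_ne_zero _ (inv_ne_zero (hne d hd))) fun d hd => (hdiff d hd).fun_pow _,
    mul_sum]
  refine sum_congr rfl fun d hd => ?_
  rw [logDeriv_fun_pow (hdiff d hd), mul_left_comm, mul_logDeriv_inv_one_sub_div_pow (hw d hd),
    degreeCount, Nat.cast_mul]
  ring

theorem mul_deriv_FqFun_div_eq_sum_pow_add_lambertTail
    (hz₀ : 0 ≤ z) (hz : z < Fintype.card F) :
    z * deriv (FqFun F m) z / FqFun F m z = ∑ j ∈ Icc 1 m, z ^ j +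
      lambertTail (fun d => (degreeCount F d : ℝ)) m (z / Fintype.card F) := by
  have hq : (0 : ℝ) < Fintype.card F := hz₀.trans_lt hz
  rw [mul_div_assoc, ← logDeriv_apply, mul_logDeriv_FqFun F hz₀ hz, sum_mul_pow_div_one_sub_pow _
    (div_nonneg hz₀ hq.le) ((div_lt_one hq).2 hz)]
  congr 1
  refine sum_congr rfl fun j hj => ?_
  have hgauss := sum_divisors_degreeCount F (Nat.one_le_iff_ne_zero.1 (mem_Icc.1 hj).1)
  rw [← Nat.cast_sum, hgauss, Nat.card_eq_fintype_card, Nat.cast_pow, ← mul_pow,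
    mul_div_cancel₀ z hq.ne']

end LogarithmicDerivative

section PerturbedRoot

open Finset

variable {m : ℕ} {n q R x y z : ℝ}

theorem le_of_sum_Icc_pow_add_eq (hz₀ : 0 ≤ z) (hzq : z < q) (hy : 1 ≤ y) (hyq : y < q)
    (hz : ∑ j ∈ Icc 1 m, z ^ j + R = n)
    (hR : (1 - z / q) * R ≤ ∑ j ∈ Icc 1 m, (q * (z / q) ^ 2) ^ j)
    (hn : (1 + (1 - y / q)⁻¹) * (m * y ^ m) < n) : y ≤ z := by
  contrapose! hn with hzy
  have hq : 0 < q := hz₀.trans_lt hzq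
  have hyq₁ : 0 < 1 - y / q := sub_pos.2 ((div_lt_one hq).2 hyq)
  have hratio : q * (z / q) ^ 2 ≤ y :=
    calc q * (z / q) ^ 2 = z * (z / q) := by field_simp
      _ ≤ z := mul_le_of_le_one_right hz₀ ((div_lt_one hq).2 hzq).le
      _ ≤ y := hzy.le
  have htail : R ≤ (1 - y / q)⁻¹ * (m * y ^ m) :=
    calc R ≤ (1 - z / q)⁻¹ * ∑ j ∈ Icc 1 m, (q * (z / q) ^ 2) ^ j :=
          (le_inv_mul_iff₀ (sub_pos.2 ((div_lt_one hq).2 hzq))).2 hR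
      _ ≤ (1 - y / q)⁻¹ * (m * y ^ m) := by
          gcongr
          exact sum_Icc_pow_le_mul_pow (by positivity) hratio hy m
  calc n = ∑ j ∈ Icc 1 m, z ^ j + R := hz.symm
    _ ≤ m * y ^ m + (1 - y / q)⁻¹ * (m * y ^ m) :=
      add_le_add (sum_Icc_pow_le_mul_pow hz₀ hzy.le hy m) htail
    _ = (1 + (1 - y / q)⁻¹) * (m * y ^ m) := by ring

theorem mul_min_sq_le_pow_mul (hn : 0 ≤ n) (hq : 0 ≤ q) (hy : 1 < y) (hyz : y ≤ z)
    (hz : ∑ j ∈ Icc 1 m, z ^ j + R = n) (hR : z ^ (2 * m) ≤ 2 * (q ^ m * R)) :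
    (1 - y⁻¹) ^ 2 / 8 * min n (q ^ m) ^ 2 ≤ q ^ m * R := by
  have hy₀ : 0 ≤ 1 - y⁻¹ := sub_nonneg.2 (inv_le_one_of_one_le₀ hy.le)
  have hy₁ : 1 - y⁻¹ ≤ 1 := sub_le_self 1 (by positivity)
  rcases le_total (n / 2) R with hlarge | hsmall
  · calc (1 - y⁻¹) ^ 2 / 8 * min n (q ^ m) ^ 2 ≤ 1 ^ 2 / 2 * min n (q ^ m) ^ 2 := by
          gcongr
          norm_num
      _ = min n (q ^ m) * (min n (q ^ m) / 2) := by ring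
      _ ≤ q ^ m * (n / 2) := by
          gcongr
          exacts [min_le_right _ _, min_le_left _ _]
      _ ≤ q ^ m * R := by gcongr
  · have htop : (1 - y⁻¹) * (n / 2) ≤ z ^ m :=
      calc (1 - y⁻¹) * (n / 2) ≤ (1 - y⁻¹) * ∑ j ∈ Icc 1 m, z ^ j := by
            gcongr
            linarith
        _ ≤ z ^ m := (one_sub_inv_mul_sum_Icc_pow_le (by linarith) hyz m).trans
            (sub_le_self _ zero_le_one)
    calc (1 - y⁻¹) ^ 2 / 8 * min n (q ^ m) ^ 2 ≤ (1 - y⁻¹) ^ 2 / 8 * n ^ 2 := by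
          gcongr
          exact min_le_left _ _
      _ = ((1 - y⁻¹) * (n / 2)) ^ 2 / 2 := by ring
      _ ≤ (z ^ m) ^ 2 / 2 := by gcongr
      _ ≤ q ^ m * R := by
          rw [← pow_mul, mul_comm m]
          linarith

theorem div_le_sub_of_sum_Icc_pow_add_eq (hq : 0 ≤ q) (hy : 1 < y) (hyz : y ≤ z)
    (hzx : z ≤ x) (hx : ∑ j ∈ Icc 1 m, x ^ j = n) (hz : ∑ j ∈ Icc 1 m, z ^ j + R = n)
    (hR : z ^ (2 * m) ≤ 2 * (q ^ m * R)) :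
    (1 - y⁻¹) ^ 2 / 8 * min n (q ^ m) ^ 2 / (q ^ m * n * m) ≤ x - z := by
  have hn : 0 ≤ n := hx ▸ sum_nonneg fun j _ => pow_nonneg (by linarith) j
  have hRle : R ≤ (x - z) * m * n := by
    have h := sum_Icc_pow_sub_le (by linarith) hzx (by linarith) m
    rw [hx] at h
    linarith
  refine div_le_of_le_mul₀ (by positivity) (sub_nonneg.2 hzx) ?_
  calc (1 - y⁻¹) ^ 2 / 8 * min n (q ^ m) ^ 2 ≤ q ^ m * R :=
        mul_min_sq_le_pow_mul hn hq hy hyz hz hR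
    _ ≤ q ^ m * ((x - z) * m * n) := by gcongr
    _ = (x - z) * (q ^ m * n * m) := by ring

theorem one_sub_div_sq_mul_sum_Icc_pow_le (hq : 0 < q) (hy : 0 < y) (hyz : y ≤ z) (m : ℕ) :
    (1 - q / y ^ 2) * ∑ j ∈ Icc 1 m, (q * (z / q) ^ 2) ^ j ≤ z ^ m * z ^ m / q ^ m := by
  have hratio : q * (z / q) ^ 2 = z ^ 2 / q := by field_simp
  calc (1 - q / y ^ 2) * ∑ j ∈ Icc 1 m, (q * (z / q) ^ 2) ^ j
      = (1 - (y ^ 2 / q)⁻¹) * ∑ j ∈ Icc 1 m, (z ^ 2 / q) ^ j := by rw [inv_div, hratio]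
    _ ≤ (z ^ 2 / q) ^ m - 1 :=
      one_sub_inv_mul_sum_Icc_pow_le (by positivity) (by gcongr) m
    _ ≤ (z ^ 2 / q) ^ m := sub_le_self _ zero_le_one
    _ = z ^ m * z ^ m / q ^ m := by rw [div_pow, pow_right_comm, sq]

theorem sub_le_div_of_sum_Icc_pow_add_eq (hm : 1 ≤ m) (hy : 0 < y) (hqy : q < y ^ 2)
    (hyz : y ≤ z) (hzq : z < q) (hzx : z ≤ x) (hx : ∑ j ∈ Icc 1 m, x ^ j = n)
    (hz : ∑ j ∈ Icc 1 m, z ^ j + R = n)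
    (hR : (1 - z / q) * R ≤ ∑ j ∈ Icc 1 m, (q * (z / q) ^ 2) ^ j) :
    x - z ≤ q / (1 - q / y ^ 2) * min n (q ^ m) / (q ^ m * m * (1 - z / q)) := by
  have hz₀ : 0 < z := hy.trans_le hyz
  have hq : 0 < q := hz₀.trans hzq
  have hw : 0 < 1 - z / q := sub_pos.2 ((div_lt_one hq).2 hzq)
  have hr : 0 < 1 - q / y ^ 2 := sub_pos.2 ((div_lt_one (by positivity)).2 hqy)
  have hzmin : z ^ m ≤ min n (q ^ m) := by
    refine le_min ?_ (by gcongr)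
    calc z ^ m ≤ x ^ m := by gcongr
      _ ≤ ∑ j ∈ Icc 1 m, x ^ j :=
        single_le_sum (fun j _ => pow_nonneg (hz₀.le.trans hzx) j) (mem_Icc.2 ⟨hm, le_rfl⟩)
      _ = n := hx
  have htangent : (x - z) * m * z ^ (m - 1) ≤ R := by
    linarith [le_sum_Icc_pow_sub hm hz₀.le hzx]
  have hcancel : (x - z) * m * (1 - z / q) * (1 - q / y ^ 2) ≤ z * z ^ m / q ^ m := by
    refine le_of_mul_le_mul_left ?_ (pow_pos hz₀ (m - 1))
    calc z ^ (m - 1) * ((x - z) * m * (1 - z / q) * (1 - q / y ^ 2))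
        = (1 - q / y ^ 2) * ((1 - z / q) * ((x - z) * m * z ^ (m - 1))) := by ring
      _ ≤ (1 - q / y ^ 2) * ((1 - z / q) * R) := by gcongr
      _ ≤ (1 - q / y ^ 2) * ∑ j ∈ Icc 1 m, (q * (z / q) ^ 2) ^ j := by gcongr
      _ ≤ z ^ m * z ^ m / q ^ m := one_sub_div_sq_mul_sum_Icc_pow_le hq hy hyz m
      _ = z ^ (m - 1) * (z * z ^ m / q ^ m) := by
        rw [← mul_div_assoc, ← mul_assoc, pow_sub_one_mul (by lia)]
  rw [le_div_iff₀ (by positivity), div_mul_eq_mul_div, le_div_iff₀ hr]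
  calc (x - z) * (q ^ m * m * (1 - z / q)) * (1 - q / y ^ 2)
      = (x - z) * m * (1 - z / q) * (1 - q / y ^ 2) * q ^ m := by ring
    _ ≤ z * z ^ m := (le_div_iff₀ (by positivity)).1 hcancel
    _ ≤ q * min n (q ^ m) := by gcongr

end PerturbedRoot

section SaddlePoint

open Finset

variable (F : Type) [Field F] [Fintype F] {m : ℕ} {n x z : ℝ}

theorem lambertTail_degreeCount_nonneg (hz₀ : 0 ≤ z) (hz : z < Fintype.card F) (m : ℕ) :
    0 ≤ lambertTail (fun d => (degreeCount F d : ℝ)) m (z / Fintype.card F) := by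
  have hq : (0 : ℝ) < Fintype.card F := hz₀.trans_lt hz
  exact lambertTail_nonneg (fun _ => Nat.cast_nonneg _) (div_nonneg hz₀ hq.le)
    ((div_le_one hq).2 hz.le) m

theorem one_sub_mul_lambertTail_degreeCount_le (hz₀ : 0 ≤ z) (hz : z < Fintype.card F) (m : ℕ) :
    (1 - z / Fintype.card F) * lambertTail (fun d => (degreeCount F d : ℝ)) m (z / Fintype.card F) ≤
      ∑ j ∈ Icc 1 m, (Fintype.card F * (z / Fintype.card F) ^ 2) ^ j := by
  have hq : (0 : ℝ) < Fintype.card F := hz₀.trans_lt hz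
  refine one_sub_mul_lambertTail_le (fun _ => Nat.cast_nonneg _) (fun d hd => ?_)
    (div_nonneg hz₀ hq.le) ((div_lt_one hq).2 hz) m
  rw [← Nat.card_eq_fintype_card]
  exact_mod_cast degreeCount_le F hd

theorem pow_two_mul_le_lambertTail_degreeCount (hz₀ : 0 ≤ z) (hz : z < Fintype.card F)
    (hm : m ≠ 0) :
    z ^ (2 * m) ≤ 2 * (Fintype.card F ^ m *
      lambertTail (fun d => (degreeCount F d : ℝ)) m (z / Fintype.card F)) := by
  set q : ℝ := (Fintype.card F : ℝ) with hq_def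
  have hq : 0 < q := hz₀.trans_lt hz
  have hcount : q ^ m ≤ 2 * degreeCount F m := by
    rw [hq_def, ← Nat.card_eq_fintype_card]
    exact_mod_cast card_pow_le_two_mul_degreeCount F hm
  calc z ^ (2 * m) = q ^ m * (q ^ m * (z / q) ^ (2 * m)) := by
        rw [div_pow, pow_mul' q 2 m, pow_two (q ^ m)]
        field_simp
    _ ≤ q ^ m * (2 * degreeCount F m * (z / q) ^ (2 * m)) := by gcongr
    _ = 2 * (q ^ m * (degreeCount F m * (z / q) ^ (2 * m))) := by ring
    _ ≤ 2 * (q ^ m * lambertTail (fun d => (degreeCount F d : ℝ)) m (z / q)) := by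
      gcongr
      exact mul_pow_two_mul_le_lambertTail (a := fun d => (degreeCount F d : ℝ))
        (fun _ => Nat.cast_nonneg _) (by positivity) ((div_lt_one hq).2 hz) hm

theorem le_of_mul_deriv_FqFun_div_eq (hm : 1 ≤ m) (hx₀ : 0 ≤ x) (hz₀ : 0 ≤ z)
    (hzq : z < Fintype.card F) (hx : ∑ j ∈ Icc 1 m, x ^ j = n)
    (hz : z * deriv (FqFun F m) z / FqFun F m z = n) : z ≤ x := by
  rw [mul_deriv_FqFun_div_eq_sum_pow_add_lambertTail F hz₀ hzq] at hz
  exact le_of_sum_Icc_pow_le hm hx₀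
    (by linarith [lambertTail_degreeCount_nonneg F hz₀ hzq m])

theorem sub_bounds_of_mul_deriv_FqFun_div_eq {y : ℝ} (hy : 1 < y) (hyq : y < Fintype.card F)
    (hqy : Fintype.card F < y ^ 2)
    (hn : (1 + (1 - y / Fintype.card F)⁻¹) * (m * y ^ m) < n)
    (hx₀ : 0 ≤ x) (hz₀ : 0 ≤ z) (hzq : z < Fintype.card F) (hx : ∑ j ∈ Icc 1 m, x ^ j = n)
    (hz : z * deriv (FqFun F m) z / FqFun F m z = n) :
    (1 - y⁻¹) ^ 2 / 8 * min n (Fintype.card F ^ m) ^ 2 / (Fintype.card F ^ m * n * m) ≤ x - z ∧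
      x - z ≤ Fintype.card F / (1 - Fintype.card F / y ^ 2) * min n (Fintype.card F ^ m) /
        (Fintype.card F ^ m * m * (1 - z / Fintype.card F)) := by
  have hyq₁ : 0 < 1 - y / Fintype.card F := sub_pos.2 ((div_lt_one (by linarith)).2 hyq)
  have hn₀ : 0 < n := lt_of_le_of_lt (by positivity) hn
  have hm : 1 ≤ m := by
    rw [Nat.one_le_iff_ne_zero]
    rintro rfl
    exact hn₀.ne (by simpa using hx)
  have hzx : z ≤ x := le_of_mul_deriv_FqFun_div_eq F hm hx₀ hz₀ hzq hx hz
  rw [mul_deriv_FqFun_div_eq_sum_pow_add_lambertTail F hz₀ hzq] at hz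
  have htail := one_sub_mul_lambertTail_degreeCount_le F hz₀ hzq m
  have hyz : y ≤ z := le_of_sum_Icc_pow_add_eq hz₀ hzq hy.le hyq hz htail hn
  exact ⟨div_le_sub_of_sum_Icc_pow_add_eq (Nat.cast_nonneg _) hy hyz hzx hx hz
      (pow_two_mul_le_lambertTail_degreeCount F hz₀ hzq (by lia)),
    sub_le_div_of_sum_Icc_pow_add_eq hm (by linarith) hqy hyz hzq hzx hx hz htail⟩

end SaddlePoint

section Asymptotics

open Filter Topology

theorem exists_lt_sq_and_mul_log_lt {q a : ℝ} (hq : 1 < q) (ha : a < 2) :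
    ∃ y, 1 < y ∧ y < q ∧ q < y ^ 2 ∧ a * log y < log q := by
  have hsqrt : 1 < √q := lt_sqrt_of_sq_lt (by linarith)
  have hlt : √q < q := sqrt_lt_self_iff.2 hq
  have hlog : a * log √q < log q := by
    rw [log_sqrt (by linarith)]
    linarith [mul_lt_mul_of_pos_right ha (log_pos hq)]
  have hcont : ContinuousAt (fun y => a * log y) √q := (continuousAt_log (by linarith)).const_mul a
  have hnear : ∀ᶠ y in 𝓝[>] √q, (√q < y ∧ y < q) ∧ a * log y < log q :=
    (eventually_mem_set.2 (Ioo_mem_nhdsGT hlt)).and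
      (nhdsWithin_le_nhds (hcont.eventually_lt_const hlog))
  obtain ⟨y, ⟨hy, hyq⟩, hay⟩ := hnear.exists
  exact ⟨y, hsqrt.trans hy, hyq, lt_sq_of_sqrt_lt hy, hay⟩

theorem eventually_mul_log_lt_rpow (K : ℝ) {r : ℝ} (hr : 0 < r) :
    ∀ᶠ t : ℝ in atTop, K * log t < t ^ r := by
  have hlim : Tendsto (fun t => K * log t / t ^ r) atTop (𝓝 0) :=
    ((isLittleO_log_rpow_atTop hr).const_mul_left K).tendsto_div_nhds_zero
  filter_upwards [hlim.eventually_lt_const one_pos, eventually_gt_atTop 0] with t ht ht₀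
  exact (div_lt_one (rpow_pos_of_pos ht₀ r)).1 ht

theorem pow_le_rpow_of_le_mul_log_div_log {a q t y : ℝ} {m : ℕ} (ht : 0 < t) (hy : 1 ≤ y)
    (hm : m ≤ a * log t / log q) : y ^ m ≤ t ^ (a * log y / log q) := by
  have hy₀ : 0 < y := by linarith
  rw [← rpow_natCast, ← log_le_log_iff (rpow_pos_of_pos hy₀ _) (rpow_pos_of_pos ht _),
    log_rpow hy₀, log_rpow ht]
  calc m * log y ≤ a * log t / log q * log y := by
        gcongr
        exact log_nonneg hy
    _ = a * log y / log q * log t := by ring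

theorem eventually_mul_pow_lt {a y q : ℝ} (A : ℝ) (hq : 1 < q) (hy : 1 ≤ y)
    (ha : a * log y < log q) :
    ∀ᶠ n : ℕ in atTop, ∀ m : ℕ, m ≤ a * log n / log q → A * (m * y ^ m) < n := by
  set s := a * log y / log q
  have hs : 0 < 1 - s := sub_pos.2 ((div_lt_one (log_pos hq)).2 ha)
  filter_upwards [tendsto_natCast_atTop_atTop.eventually
    (eventually_mul_log_lt_rpow (|A| * (a / log q)) hs), eventually_gt_atTop 0] with n hlog hn m hm
  have hn₀ : (0 : ℝ) < n := Nat.cast_pos.2 hn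
  calc A * (m * y ^ m) ≤ |A| * (a * log n / log q * (n : ℝ) ^ s) := by
        gcongr
        · exact le_abs_self A
        · exact (Nat.cast_nonneg m).trans hm
        · exact pow_le_rpow_of_le_mul_log_div_log hn₀ hy hm
    _ = |A| * (a / log q) * log n * (n : ℝ) ^ s := by ring
    _ < (n : ℝ) ^ (1 - s) * (n : ℝ) ^ s := by gcongr
    _ = n := by rw [← rpow_add hn₀, sub_add_cancel, rpow_one]

end Asymptotics

theorem stmt17_general :
    (∀ (F : Type) [Field F] [Fintype F], ∀ n m : ℕ, 1 ≤ m →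
      ∀ x : ℝ, 0 < x → (∑ i ∈ Finset.Icc 1 m, x ^ i) = (n : ℝ) →
      ∀ xq : ℝ, 0 < xq → xq < (Fintype.card F : ℝ) →
      xq * deriv (FqFun F m) xq / FqFun F m xq = (n : ℝ) → xq ≤ x) ∧
    (∀ (F : Type) [Field F] [Fintype F], ∀ a : ℝ, a < 2 →
      ∃ c C : ℝ, 0 < c ∧ 0 < C ∧ ∃ N : ℕ, ∀ n : ℕ, N ≤ n → ∀ m : ℕ,
      (m : ℝ) ≤ a * Real.log n / Real.log (Fintype.card F) →
      ∀ x : ℝ, 0 < x → (∑ i ∈ Finset.Icc 1 m, x ^ i) = (n : ℝ) →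
      ∀ xq : ℝ, 0 < xq → xq < (Fintype.card F : ℝ) →
      xq * deriv (FqFun F m) xq / FqFun F m xq = (n : ℝ) →
      c * (min (n : ℝ) ((Fintype.card F : ℝ) ^ m)) ^ 2 /
          ((Fintype.card F : ℝ) ^ m * (n : ℝ) * (m : ℝ)) ≤ x - xq ∧
        x - xq ≤ C * min (n : ℝ) ((Fintype.card F : ℝ) ^ m) /
          ((Fintype.card F : ℝ) ^ m * (m : ℝ) * (1 - xq / (Fintype.card F : ℝ)))) := by
  refine ⟨fun F _ _ n m hm x hx₀ hx xq hxq₀ hxq h =>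
    le_of_mul_deriv_FqFun_div_eq F hm hx₀.le hxq₀.le hxq hx h, fun F _ _ a ha => ?_⟩
  have hq : (1 : ℝ) < Fintype.card F := Nat.one_lt_cast.2 Fintype.one_lt_card
  obtain ⟨y, hy, hyq, hqy, hlog⟩ := exists_lt_sq_and_mul_log_lt hq ha
  obtain ⟨N, hN⟩ := Filter.eventually_atTop.1
    (eventually_mul_pow_lt (1 + (1 - y / Fintype.card F)⁻¹) hq hy.le hlog)
  have hc : 0 < (1 - y⁻¹) ^ 2 / 8 := by
    have := sub_pos.2 (inv_lt_one_of_one_lt₀ hy)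
    positivity
  have hC : 0 < Fintype.card F / (1 - Fintype.card F / y ^ 2) :=
    div_pos (by linarith) (sub_pos.2 ((div_lt_one (by positivity)).2 hqy))
  exact ⟨_, _, hc, hC, N, fun n hn m hm x hx₀ hx xq hxq₀ hxq h =>
    sub_bounds_of_mul_deriv_FqFun_div_eq F hy hyq hqy (hN n hn m hm) hx₀.le hxq₀.le hxq hx h⟩

/-- (i) For every prime power `q` (cardinality of a finite field `F`) and
all integers `n ≥ m ≥ 1`, one has `x_q ≤ x`. (ii) Fix such `q` and `ε ∈ (0,1/2)`.
There exist `c, C > 0` and `N` such that for all `n ≥ N` and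
`(3/4)·log_q n ≤ m ≤ (2−ε)·log_q n`, one has
`c·(min{n,q^m})²/(q^m·n·m) ≤ x − x_q ≤ C·min{n,q^m}/(q^m·m·(1 − x_q/q))`. -/
theorem stmt17 :
    (∀ (F : Type) [Field F] [Fintype F], ∀ n m : ℕ, 1 ≤ m → m ≤ n →
      ∀ x : ℝ, 0 < x → (∑ i ∈ Finset.Icc 1 m, x ^ i) = (n : ℝ) →
      ∀ xq : ℝ, 0 < xq → xq < (Fintype.card F : ℝ) →
      xq * deriv (FqFun F m) xq / FqFun F m xq = (n : ℝ) → xq ≤ x) ∧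
    (∀ (F : Type) [Field F] [Fintype F], ∀ ε : ℝ, 0 < ε → ε < 1 / 2 →
      ∃ c C : ℝ, 0 < c ∧ 0 < C ∧ ∃ N : ℕ, ∀ n : ℕ, N ≤ n → ∀ m : ℕ,
      (3 / 4) * Real.log n / Real.log (Fintype.card F) ≤ (m : ℝ) →
      (m : ℝ) ≤ (2 - ε) * Real.log n / Real.log (Fintype.card F) →
      ∀ x : ℝ, 0 < x → (∑ i ∈ Finset.Icc 1 m, x ^ i) = (n : ℝ) →
      ∀ xq : ℝ, 0 < xq → xq < (Fintype.card F : ℝ) →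
      xq * deriv (FqFun F m) xq / FqFun F m xq = (n : ℝ) →
      c * (min (n : ℝ) ((Fintype.card F : ℝ) ^ m)) ^ 2 /
          ((Fintype.card F : ℝ) ^ m * (n : ℝ) * (m : ℝ)) ≤ x - xq ∧
        x - xq ≤ C * min (n : ℝ) ((Fintype.card F : ℝ) ^ m) /
          ((Fintype.card F : ℝ) ^ m * (m : ℝ) * (1 - xq / (Fintype.card F : ℝ)))) := by
  exact ⟨fun F _ _ n m hm _ => stmt17_general.1 F n m hm, fun F _ _ ε hε _ => by
    obtain ⟨c, C, hc, hC, N, h⟩ := stmt17_general.2 F (2 - ε) (by linarith)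
    exact ⟨c, C, hc, hC, N, fun n hn m _ => h n hn m⟩⟩
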